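/- (Strong law of large numbers for the RWI.) Almost surely, S_n/n converges to μ as n → ∞. -/

import Mathlib

open MeasureTheory ProbabilityTheory Real Filter Set
open scoped BigOperators NNReal

noncomputable section

namespace RWI

abbrev E : Type := EuclideanSpace ℝ (Fin 3)

def vec (x y z : ℝ) : E := (EuclideanSpace.equiv (Fin 3) ℝ).symm ![x, y, z]

/-- The two families of vertices of the `1h` ice lattice. -/
def V (a h : ℝ) (i : Fin 2) : Set E :=
  {v | ∃ k l n : ℤ, v = vec (a * ((i : ℕ) + (3 / 2) * k))
      (a * ((Real.sqrt 3 / 2) * k + Real.sqrt 3 * l)) (h * n)}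

/-- Horizontal jump from a vertex of type `i` in direction `j`. -/
def w (a : ℝ) (i : Fin 2) (j : Fin 3) : E :=
  vec (a * Real.cos (2 * (j : ℕ) * π / 3 + (i : ℕ) * π))
      (a * Real.sin (2 * (j : ℕ) * π / 3 + (i : ℕ) * π)) 0

/-- `S` is a random walk on ice with parameters `a, h, p, α, q` and natural filtration `F`. -/
structure IsRWI {Ω : Type} [MeasurableSpace Ω] (P : Measure Ω)
    (a h p α : ℝ) (q : Fin 2 → Fin 3 → ℝ)
    (S : ℕ → Ω → E) (F : ℕ → MeasurableSpace Ω) : Prop where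
  prob : IsProbabilityMeasure P
  ha : 0 < a
  hh : 0 < h
  hp0 : 0 ≤ p
  hp1 : p ≤ 1
  hα0 : 0 < α
  hα1 : α < 1
  hq : ∀ i j, 0 ≤ q i j
  hqsum : ∀ i, q i 0 + q i 1 + q i 2 = 1 - p
  hS0 : ∀ ω, S 0 ω = 0
  hSmeas : ∀ n, Measurable (S n)
  hF : ∀ n, F n =
    MeasurableSpace.comap (fun ω (k : Fin n) => S ((k : ℕ) + 1) ω - S (k : ℕ) ω)
      MeasurableSpace.pi
  hTrans : ∀ (n : ℕ) (f : E → ℝ), Measurable f → (∃ C, ∀ x, |f x| ≤ C) →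
    P[fun ω => f (S (n + 1) ω)|F n] =ᵐ[P]
      fun ω => ∑ i : Fin 2, (V a h i).indicator (fun _ => (1 : ℝ)) (S n ω) *
        (α * p * f (S n ω + vec 0 0 h) + (1 - α) * p * f (S n ω + vec 0 0 (-h)) +
          ∑ j : Fin 3, q i j * f (S n ω + w a i j))

def uu (q : Fin 2 → Fin 3 → ℝ) (i : Fin 2) : ℝ := q i 1 + q i 2

def vv (q : Fin 2 → Fin 3 → ℝ) (i : Fin 2) : ℝ := q i 1 - q i 2

/-- The drift vector `μ` of the RWI. -/
def muI (a h p α : ℝ) (q : Fin 2 → Fin 3 → ℝ) : E :=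
  vec (3 * a / 4 * (-(uu q 0) + uu q 1)) (a * Real.sqrt 3 / 4 * (vv q 0 - vv q 1))
    (h * p * (2 * α - 1))

/-- The vector `θ` of the RWI. -/
def thetaI (a p : ℝ) (q : Fin 2 → Fin 3 → ℝ) : E :=
  vec (a * ((1 - p) - 3 / 4 * (uu q 0 + uu q 1))) (a * Real.sqrt 3 / 4 * (vv q 0 + vv q 1)) 0

/-- The sign process `ε_n = 1_{S_n ∈ V_0} - 1_{S_n ∈ V_1}`. -/
def epsI {Ω : Type} (a h : ℝ) (S : ℕ → Ω → E) (n : ℕ) (ω : Ω) : ℝ :=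
  (V a h 0).indicator (fun _ => (1 : ℝ)) (S n ω) - (V a h 1).indicator (fun _ => (1 : ℝ)) (S n ω)

end RWI

/-!
A horizontal jump switches the type of the vertex, so the mean jump alternates between `μ + θ` on
`V₀` and `μ - θ` on `V₁`: from `S n` it is `μ + ε θ`, where `ε = ±1` is the sign of `S n`. A jump
flips the sign with probability `1 - p`, hence for the vector `c` with `2 (1 - p) c = θ` the process
`S n - n μ + ε c` is a martingale. Its increments are bounded, so Chow's strong law (the martingale
with increments scaled by `1 / n` is bounded in `L²`, hence convergent, and Kronecker's lemma
applies) shows that it is `o(n)` almost surely, and so is the bounded term `ε c`.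
-/

section Kronecker

variable {E : Type*} [NormedAddCommGroup E] [NormedSpace ℝ E]

lemma sum_range_eq_smul_sum_sub_sum (x : ℕ → E) (n : ℕ) :
    ∑ k ∈ Finset.range n, x k =
      (n : ℝ) • ∑ k ∈ Finset.range n, ((k : ℝ) + 1)⁻¹ • x k -
        ∑ m ∈ Finset.range n, ∑ k ∈ Finset.range m, ((k : ℝ) + 1)⁻¹ • x k := by
  induction n with
  | zero => simp
  | succ n ih =>
    have hn : (n : ℝ) + 1 ≠ 0 := by positivity
    rw [Finset.sum_range_succ x, ih, Finset.sum_range_succ _ n, Finset.sum_range_succ _ n,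
      Nat.cast_succ, smul_add, smul_inv_smul₀ hn]
    module

/-- **Kronecker's lemma** for the weights `1, 2, 3, …`. -/
lemma tendsto_inv_smul_sum_of_tendsto_sum_inv_smul {x : ℕ → E} {s : E}
    (hs : Tendsto (fun n ↦ ∑ k ∈ Finset.range n, ((k : ℝ) + 1)⁻¹ • x k) atTop (nhds s)) :
    Tendsto (fun n : ℕ ↦ (n : ℝ)⁻¹ • ∑ k ∈ Finset.range n, x k) atTop (nhds 0) := by
  have hlim := hs.sub hs.cesaro_smul
  rw [sub_self] at hlim
  refine hlim.congr' ?_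
  filter_upwards [eventually_ne_atTop 0] with n hn
  rw [sum_range_eq_smul_sum_sub_sum x, smul_sub, inv_smul_smul₀ (Nat.cast_ne_zero.2 hn)]

end Kronecker

section Martingale

variable {Ω : Type*} {m0 : MeasurableSpace Ω} {P : Measure Ω} {ℱ : Filtration ℕ m0}
  {M : ℕ → Ω → ℝ}

lemma condExp_martingale_sub_eq_zero (hM : Martingale M ℱ P) (n : ℕ) :
    P[M (n + 1) - M n | ℱ n] =ᵐ[P] 0 := by
  filter_upwards [condExp_sub (hM.integrable (n + 1)) (hM.integrable n) (ℱ n),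
    hM.condExp_ae_eq n.le_succ, hM.condExp_ae_eq le_rfl] with ω hsub hsucc hself
  rw [hsub, Pi.sub_apply, hsucc, hself, sub_self, Pi.zero_apply]

lemma martingale_sum_smul_sub [IsFiniteMeasure P] (hM : Martingale M ℱ P) (c : ℕ → ℝ) :
    Martingale (fun n ↦ ∑ k ∈ Finset.range n, c k • (M (k + 1) - M k)) ℱ P := by
  refine martingale_of_condExp_sub_eq_zero_nat (fun n ↦ ?_) (fun n ↦ ?_) fun n ↦ ?_
  · refine Finset.stronglyMeasurable_sum _ fun k hk ↦ ?_
    rw [Finset.mem_range] at hk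
    exact (((hM.stronglyAdapted _).mono (ℱ.mono hk)).sub
      ((hM.stronglyAdapted _).mono (ℱ.mono hk.le))).const_smul _
  · exact integrable_finsetSum' _ fun k _ ↦
      ((hM.integrable _).sub (hM.integrable _)).smul (c k)
  · simp only [Finset.sum_range_succ, add_sub_cancel_left]
    filter_upwards [condExp_smul (c n) (M (n + 1) - M n) (ℱ n) (μ := P),
      condExp_martingale_sub_eq_zero hM n] with ω hsmul hzero
    rw [hsmul, Pi.smul_apply, hzero, Pi.zero_apply, smul_zero]

lemma integral_mul_martingale_sub_eq_zero [SigmaFiniteFiltration P ℱ] (hM : Martingale M ℱ P)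
    (hL2 : ∀ n, MemLp (M n) 2 P) (n : ℕ) :
    ∫ ω, M n ω * (M (n + 1) ω - M n ω) ∂P = 0 := by
  have hpull : P[M n * (M (n + 1) - M n) | ℱ n] =ᵐ[P] M n * P[M (n + 1) - M n | ℱ n] :=
    condExp_mul_of_stronglyMeasurable_left (hM.stronglyAdapted n)
      ((hL2 n).integrable_mul ((hL2 (n + 1)).sub (hL2 n)))
      ((hM.integrable _).sub (hM.integrable _))
  calc ∫ ω, M n ω * (M (n + 1) ω - M n ω) ∂P
      = ∫ ω, (P[M n * (M (n + 1) - M n) | ℱ n]) ω ∂P := (integral_condExp (ℱ.le n)).symm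
    _ = ∫ _, 0 ∂P := by
      refine integral_congr_ae ?_
      filter_upwards [hpull, condExp_martingale_sub_eq_zero hM n] with ω hω hzero
      rw [hω, Pi.mul_apply, hzero, Pi.zero_apply, mul_zero]
    _ = 0 := integral_zero _ _

lemma integral_sq_martingale_succ [SigmaFiniteFiltration P ℱ] (hM : Martingale M ℱ P)
    (hL2 : ∀ n, MemLp (M n) 2 P) (n : ℕ) :
    ∫ ω, M (n + 1) ω ^ 2 ∂P = ∫ ω, M n ω ^ 2 ∂P + ∫ ω, (M (n + 1) ω - M n ω) ^ 2 ∂P := by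
  have hsub : MemLp (fun ω ↦ M (n + 1) ω - M n ω) 2 P := (hL2 (n + 1)).sub (hL2 n)
  have hsquares : Integrable (fun ω ↦ M n ω ^ 2 + (M (n + 1) ω - M n ω) ^ 2) P :=
    (hL2 n).integrable_sq.add hsub.integrable_sq
  have hcross : Integrable (fun ω ↦ 2 * (M n ω * (M (n + 1) ω - M n ω))) P :=
    ((hL2 n).integrable_mul hsub).const_mul 2
  calc ∫ ω, M (n + 1) ω ^ 2 ∂P
      = ∫ ω, (M n ω ^ 2 + (M (n + 1) ω - M n ω) ^ 2
          + 2 * (M n ω * (M (n + 1) ω - M n ω))) ∂P := by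
        congr 1 with ω
        ring
    _ = ∫ ω, M n ω ^ 2 ∂P + ∫ ω, (M (n + 1) ω - M n ω) ^ 2 ∂P := by
        rw [integral_add hsquares hcross,
          integral_add (hL2 n).integrable_sq hsub.integrable_sq, integral_const_mul,
          integral_mul_martingale_sub_eq_zero hM hL2 n, mul_zero, add_zero]

lemma integral_sq_martingale_eq_add_sum [SigmaFiniteFiltration P ℱ] (hM : Martingale M ℱ P)
    (hL2 : ∀ n, MemLp (M n) 2 P) (n : ℕ) :
    ∫ ω, M n ω ^ 2 ∂P =
      ∫ ω, M 0 ω ^ 2 ∂P + ∑ k ∈ Finset.range n, ∫ ω, (M (k + 1) ω - M k ω) ^ 2 ∂P := by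
  induction n with
  | zero => simp
  | succ n ih => rw [integral_sq_martingale_succ hM hL2, ih, Finset.sum_range_succ, add_assoc]

lemma ae_exists_tendsto_of_summable_integral_sq_sub [IsFiniteMeasure P] (hM : Martingale M ℱ P)
    (hL2 : ∀ n, MemLp (M n) 2 P)
    (hsum : Summable fun n ↦ ∫ ω, (M (n + 1) ω - M n ω) ^ 2 ∂P) :
    ∀ᵐ ω ∂P, ∃ c, Tendsto (fun n ↦ M n ω) atTop (nhds c) := by
  obtain ⟨C, hC⟩ : ∃ C, ∀ n, ∫ ω, M n ω ^ 2 ∂P ≤ C :=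
    ⟨_, fun n ↦ (integral_sq_martingale_eq_add_sum hM hL2 n).trans_le <| add_le_add_right
      (hsum.sum_le_tsum _ fun k _ ↦ integral_nonneg fun ω ↦ sq_nonneg _) _⟩
  refine hM.submartingale.exists_ae_tendsto_of_bdd
    (R := (C + P.real univ).toNNReal) fun n ↦ ?_
  rw [eLpNorm_one_eq_lintegral_enorm, ← ofReal_integral_norm_eq_lintegral_enorm (hM.integrable n)]
  refine ENNReal.ofReal_le_ofReal ?_
  calc ∫ ω, ‖M n ω‖ ∂P ≤ ∫ ω, (M n ω ^ 2 + 1) ∂P := by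
        refine integral_mono (hM.integrable n).norm
          ((hL2 n).integrable_sq.add (integrable_const 1)) fun ω ↦ ?_
        rw [Real.norm_eq_abs, ← sq_abs (M n ω)]
        nlinarith [sq_nonneg (|M n ω| - 1), abs_nonneg (M n ω)]
    _ = ∫ ω, M n ω ^ 2 ∂P + P.real univ := by
        rw [integral_add (hL2 n).integrable_sq (integrable_const 1), integral_const, smul_eq_mul,
          mul_one]
    _ ≤ C + P.real univ := by gcongr; exact hC n

/-- **Chow's strong law of large numbers** for square-integrable martingales. -/
theorem ae_tendsto_inv_mul_martingale [IsFiniteMeasure P] (hM : Martingale M ℱ P)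
    (hL2 : ∀ n, MemLp (M n) 2 P)
    (hsum : Summable fun n : ℕ ↦ (∫ ω, (M (n + 1) ω - M n ω) ^ 2 ∂P) / ((n : ℝ) + 1) ^ 2) :
    ∀ᵐ ω ∂P, Tendsto (fun n : ℕ ↦ (n : ℝ)⁻¹ * M n ω) atTop (nhds 0) := by
  let N : ℕ → Ω → ℝ := fun n ↦ ∑ k ∈ Finset.range n, ((k : ℝ) + 1)⁻¹ • (M (k + 1) - M k)
  have hN_sub (n : ℕ) : ∫ ω, (N (n + 1) ω - N n ω) ^ 2 ∂P
      = (∫ ω, (M (n + 1) ω - M n ω) ^ 2 ∂P) / ((n : ℝ) + 1) ^ 2 := by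
    simp only [N, Finset.sum_range_succ, Pi.add_apply, add_sub_cancel_left, Pi.smul_apply,
      Pi.sub_apply, smul_eq_mul, ← div_eq_inv_mul, div_pow, integral_div]
  have hN_L2 (n : ℕ) : MemLp (N n) 2 P :=
    memLp_finsetSum' _ fun k _ ↦ ((hL2 (k + 1)).sub (hL2 k)).const_smul _
  have hN_lim := ae_exists_tendsto_of_summable_integral_sq_sub
    (martingale_sum_smul_sub hM _) hN_L2 (hsum.congr fun n ↦ (hN_sub n).symm)
  filter_upwards [hN_lim] with ω ⟨s, hs⟩
  simp only [Finset.sum_apply, Pi.smul_apply, Pi.sub_apply] at hs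
  have hsum_lim := tendsto_inv_smul_sum_of_tendsto_sum_inv_smul hs
  simp only [Finset.sum_range_sub (fun k ↦ M k ω), smul_eq_mul] at hsum_lim
  have hzero_lim := tendsto_inv_atTop_nhds_zero_nat.mul_const (M 0 ω)
  simpa only [← mul_add, sub_add_cancel, zero_mul, add_zero] using hsum_lim.add hzero_lim

theorem ae_tendsto_inv_mul_martingale_of_abs_sub_le [IsFiniteMeasure P] (hM : Martingale M ℱ P)
    (h0 : MemLp (M 0) 2 P) {K : ℝ} (hK : ∀ n, ∀ᵐ ω ∂P, |M (n + 1) ω - M n ω| ≤ K) :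
    ∀ᵐ ω ∂P, Tendsto (fun n : ℕ ↦ (n : ℝ)⁻¹ * M n ω) atTop (nhds 0) := by
  have hsub (n : ℕ) : MemLp (M (n + 1) - M n) 2 P :=
    .of_bound ((hM.integrable _).sub (hM.integrable _)).aestronglyMeasurable K (hK n)
  have hL2 (n : ℕ) : MemLp (M n) 2 P := by
    induction n with
    | zero => exact h0
    | succ n ih => simpa using (hsub n).add ih
  have hint (n : ℕ) : ∫ ω, (M (n + 1) ω - M n ω) ^ 2 ∂P ≤ P.real univ * K ^ 2 := by
    rw [← smul_eq_mul, ← integral_const]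
    refine integral_mono_ae (hsub n).integrable_sq (integrable_const _) ?_
    filter_upwards [hK n] with ω hω
    exact sq_le_sq' (abs_le.1 hω).1 (abs_le.1 hω).2
  refine ae_tendsto_inv_mul_martingale hM hL2 <| Summable.of_nonneg_of_le
    (fun n ↦ div_nonneg (integral_nonneg fun ω ↦ sq_nonneg _) (sq_nonneg _))
    (fun n ↦ div_le_div_of_nonneg_right (hint n) (sq_nonneg _)) ?_
  have := (summable_nat_add_iff 1).2 (Real.summable_one_div_nat_pow.2 one_lt_two)
  simpa [div_eq_mul_inv] using this.mul_left (P.real univ * K ^ 2)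

end Martingale

lemma ae_imp_eq_zero_of_condExp_eq_zero {Ω : Type*} {m m0 : MeasurableSpace Ω} {P : Measure Ω}
    (hm : m ≤ m0) [SigmaFinite (P.trim hm)] {g : Ω → ℝ} (hg : Integrable g P) (hg0 : 0 ≤ᵐ[P] g)
    {s : Set Ω} (hs : MeasurableSet[m] s) (hzero : ∀ᵐ ω ∂P, ω ∈ s → (P[g | m]) ω = 0) :
    ∀ᵐ ω ∂P, ω ∈ s → g ω = 0 := by
  have hint : ∫ ω in s, g ω ∂P = 0 := by
    rw [← setIntegral_condExp hm hg hs, setIntegral_congr_ae (hm s hs) hzero, integral_zero]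
  rw [setIntegral_eq_zero_iff_of_nonneg_ae (ae_restrict_of_ae hg0) hg.integrableOn] at hint
  exact (ae_restrict_iff' (hm s hs)).1 hint

namespace RWI

section Lattice

@[simp] lemma vec_apply_zero (x y z : ℝ) : vec x y z 0 = x := rfl
@[simp] lemma vec_apply_one (x y z : ℝ) : vec x y z 1 = y := rfl
@[simp] lemma vec_apply_two (x y z : ℝ) : vec x y z 2 = z := rfl

lemma vec_add_vec (x y z x' y' z' : ℝ) :
    vec x y z + vec x' y' z' = vec (x + x') (y + y') (z + z') := by
  ext l; fin_cases l <;> simp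

lemma smul_vec (t x y z : ℝ) : t • vec x y z = vec (t * x) (t * y) (t * z) := by
  ext l; fin_cases l <;> simp

lemma norm_vec (x y z : ℝ) : ‖vec x y z‖ = √(x ^ 2 + y ^ 2 + z ^ 2) := by
  simp [EuclideanSpace.norm_eq, Fin.sum_univ_three]

variable (a h : ℝ)

lemma w_eq_neg_one_pow_smul (i : Fin 2) (j : Fin 3) : w a i j =
    (-1 : ℝ) ^ (i : ℕ) •
      vec (a * cos (2 * (j : ℕ) * π / 3)) (a * sin (2 * (j : ℕ) * π / 3)) 0 := by
  rw [w, cos_add_nat_mul_pi, sin_add_nat_mul_pi, smul_vec]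
  congr 1 <;> ring

lemma w_zero (i : Fin 2) : w a i 0 = (-1 : ℝ) ^ (i : ℕ) • vec a 0 0 := by
  simp [w_eq_neg_one_pow_smul]

lemma w_one (i : Fin 2) :
    w a i 1 = (-1 : ℝ) ^ (i : ℕ) • vec (-(a / 2)) (a * (√3 / 2)) 0 := by
  have hangle : 2 * ((1 : Fin 3) : ℕ) * π / 3 = π - π / 3 := by norm_num; ring
  rw [w_eq_neg_one_pow_smul, hangle, cos_pi_sub, sin_pi_sub, cos_pi_div_three, sin_pi_div_three]
  congr 2; ring

lemma w_two (i : Fin 2) :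
    w a i 2 = (-1 : ℝ) ^ (i : ℕ) • vec (-(a / 2)) (-(a * (√3 / 2))) 0 := by
  have hangle : 2 * ((2 : Fin 3) : ℕ) * π / 3 = π / 3 + π := by norm_num; ring
  rw [w_eq_neg_one_pow_smul, hangle, cos_add_pi, sin_add_pi, cos_pi_div_three, sin_pi_div_three]
  congr 2 <;> ring

lemma norm_w (i : Fin 2) (j : Fin 3) : ‖w a i j‖ = |a| := by
  rw [w, norm_vec, ← Real.sqrt_sq_eq_abs]
  congr 1
  linear_combination a ^ 2 * cos_sq_add_sin_sq (2 * (j : ℕ) * π / 3 + (i : ℕ) * π)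

/-- The jumps available from a vertex of type `i`. -/
def jumps (i : Fin 2) : Set E := {vec 0 0 h, vec 0 0 (-h)} ∪ range (w a i)

lemma finite_jumps (i : Fin 2) : (jumps a h i).Finite :=
  (toFinite _).union (finite_range _)

variable {a h} {i : Fin 2} {x v : E}

lemma norm_le_of_mem_jumps (hv : v ∈ jumps a h i) : ‖v‖ ≤ max |a| |h| := by
  rcases hv with (rfl | rfl) | ⟨j, rfl⟩
  · simp [norm_vec, Real.sqrt_sq_eq_abs]
  · simp [norm_vec, Real.sqrt_sq_eq_abs]
  · exact (norm_w a i j).trans_le (le_max_left _ _)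

lemma zero_mem_V : (0 : E) ∈ V a h 0 := ⟨0, 0, 0, by ext l; fin_cases l <;> simp⟩

lemma countable_V (i : Fin 2) : (V a h i).Countable := by
  refine (countable_range fun t : ℤ × ℤ × ℤ ↦ vec (a * ((i : ℕ) + (3 / 2) * t.1))
    (a * ((√3 / 2) * t.1 + √3 * t.2.1)) (h * t.2.2)).mono ?_
  rintro _ ⟨k, l, n, rfl⟩
  exact ⟨(k, l, n), rfl⟩

lemma eq_of_mem_V_of_mem_V (ha : a ≠ 0) {j : Fin 2} (hi : x ∈ V a h i) (hj : x ∈ V a h j) :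
    i = j := by
  obtain ⟨k, l, n, rfl⟩ := hi
  obtain ⟨k', l', n', heq⟩ := hj
  have hfst := mul_left_cancel₀ ha (congrArg (fun v : E ↦ v 0) heq)
  have hint : 2 * ((i : ℕ) : ℤ) + 3 * k = 2 * ((j : ℕ) : ℤ) + 3 * k' := by
    exact_mod_cast (by linarith : (2 * (i : ℕ) + 3 * k : ℝ) = 2 * (j : ℕ) + 3 * k')
  omega

lemma add_vertical_mem_V (hx : x ∈ V a h i) (m : ℤ) : x + vec 0 0 (m * h) ∈ V a h i := by
  obtain ⟨k, l, n, rfl⟩ := hx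
  refine ⟨k, l, n + m, ?_⟩
  rw [vec_add_vec]
  push_cast
  congr 1 <;> ring

lemma natCast_one_sub (i : Fin 2) : (((1 - i : Fin 2) : ℕ) : ℝ) = (i : ℕ) + (-1) ^ (i : ℕ) := by
  fin_cases i <;> simp

lemma add_w_mem_V (hx : x ∈ V a h i) (j : Fin 3) : x + w a i j ∈ V a h (1 - i) := by
  obtain ⟨k, l, n, rfl⟩ := hx
  match j with
  | 0 =>
    refine ⟨k, l, n, ?_⟩
    rw [w_zero, smul_vec, vec_add_vec, natCast_one_sub]
    congr 1 <;> ring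
  | 1 =>
    refine ⟨k - (-1) ^ (i : ℕ), l + (-1) ^ (i : ℕ), n, ?_⟩
    rw [w_one, smul_vec, vec_add_vec, natCast_one_sub]
    push_cast
    congr 1 <;> ring
  | 2 =>
    refine ⟨k - (-1) ^ (i : ℕ), l, n, ?_⟩
    rw [w_two, smul_vec, vec_add_vec, natCast_one_sub]
    push_cast
    congr 1 <;> ring

lemma add_up_mem_V (hx : x ∈ V a h i) : x + vec 0 0 h ∈ V a h i := by
  simpa using add_vertical_mem_V hx 1

lemma add_down_mem_V (hx : x ∈ V a h i) : x + vec 0 0 (-h) ∈ V a h i := by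
  simpa using add_vertical_mem_V hx (-1)

lemma exists_add_mem_V_of_mem_jumps (hx : x ∈ V a h i) (hv : v ∈ jumps a h i) :
    ∃ j, x + v ∈ V a h j := by
  rcases hv with (rfl | rfl) | ⟨j, rfl⟩
  · exact ⟨i, add_up_mem_V hx⟩
  · exact ⟨i, add_down_mem_V hx⟩
  · exact ⟨1 - i, add_w_mem_V hx j⟩

variable (a h) in
/-- The sign of a lattice point: `1` on `V₀` and `-1` on `V₁`, so that the sign process
`epsI a h S n ω` is `vertexSign a h (S n ω)`. -/
def vertexSign (x : E) : ℝ :=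
  (V a h 0).indicator (fun _ ↦ (1 : ℝ)) x - (V a h 1).indicator (fun _ ↦ (1 : ℝ)) x

variable (a h) in
lemma measurable_vertexSign : Measurable (vertexSign a h) :=
  (measurable_const.indicator (countable_V 0).measurableSet).sub
    (measurable_const.indicator (countable_V 1).measurableSet)

lemma abs_vertexSign_le_one (x : E) : |vertexSign a h x| ≤ 1 := by
  by_cases h0 : x ∈ V a h 0 <;> by_cases h1 : x ∈ V a h 1 <;> simp [vertexSign, h0, h1]

lemma vertexSign_eq_neg_one_pow (ha : a ≠ 0) (hx : x ∈ V a h i) :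
    vertexSign a h x = (-1) ^ (i : ℕ) := by
  have hiff (j : Fin 2) : x ∈ V a h j ↔ j = i :=
    ⟨fun hj ↦ eq_of_mem_V_of_mem_V ha hj hx, fun hji ↦ hji ▸ hx⟩
  fin_cases i <;> simp [vertexSign, hiff]

lemma vertexSign_add_up (ha : a ≠ 0) (hx : x ∈ V a h i) :
    vertexSign a h (x + vec 0 0 h) = vertexSign a h x := by
  rw [vertexSign_eq_neg_one_pow ha hx, vertexSign_eq_neg_one_pow ha (add_up_mem_V hx)]

lemma vertexSign_add_down (ha : a ≠ 0) (hx : x ∈ V a h i) :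
    vertexSign a h (x + vec 0 0 (-h)) = vertexSign a h x := by
  rw [vertexSign_eq_neg_one_pow ha hx, vertexSign_eq_neg_one_pow ha (add_down_mem_V hx)]

lemma vertexSign_add_w (ha : a ≠ 0) (hx : x ∈ V a h i) (j : Fin 3) :
    vertexSign a h (x + w a i j) = -vertexSign a h x := by
  rw [vertexSign_eq_neg_one_pow ha hx, vertexSign_eq_neg_one_pow ha (add_w_mem_V hx j)]
  fin_cases i <;> simp

/-- A trajectory on the lattice started at the origin. -/
structure IsLatticePath (a h : ℝ) (x : ℕ → E) : Prop where
  zero : x 0 = 0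
  sub_mem_jumps : ∀ n i, x n ∈ V a h i → x (n + 1) - x n ∈ jumps a h i

namespace IsLatticePath

variable {x : ℕ → E} (hx : IsLatticePath a h x)
include hx

lemma exists_mem_V (n : ℕ) : ∃ i, x n ∈ V a h i := by
  induction n with
  | zero => exact ⟨0, hx.zero ▸ zero_mem_V⟩
  | succ n ih =>
    obtain ⟨i, hi⟩ := ih
    simpa using exists_add_mem_V_of_mem_jumps hi (hx.sub_mem_jumps n i hi)

lemma norm_sub_le (n : ℕ) : ‖x (n + 1) - x n‖ ≤ max |a| |h| := by
  obtain ⟨i, hi⟩ := hx.exists_mem_V n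
  exact norm_le_of_mem_jumps (hx.sub_mem_jumps n i hi)

lemma norm_le (n : ℕ) : ‖x n‖ ≤ n * max |a| |h| := by
  induction n with
  | zero => simp [hx.zero]
  | succ n ih =>
    calc ‖x (n + 1)‖ ≤ ‖x n‖ + ‖x (n + 1) - x n‖ := norm_le_norm_add_norm_sub' _ _
      _ ≤ n * max |a| |h| + max |a| |h| := add_le_add ih (hx.norm_sub_le n)
      _ = (n + 1 : ℕ) * max |a| |h| := by push_cast; ring

end IsLatticePath

end Lattice

section Drift

variable {a h p α : ℝ} {q : Fin 2 → Fin 3 → ℝ}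

/-- The expectation of `f ξ`, where `ξ` is the jump of the walk from a vertex of type `i`. -/
def stepMean {G : Type*} [AddCommGroup G] [Module ℝ G] (a h p α : ℝ) (q : Fin 2 → Fin 3 → ℝ)
    (i : Fin 2) (f : E → G) : G :=
  (α * p) • f (vec 0 0 h) + ((1 - α) * p) • f (vec 0 0 (-h)) + ∑ j, q i j • f (w a i j)

section

variable {G G' : Type*} [AddCommGroup G] [Module ℝ G] [AddCommGroup G'] [Module ℝ G'] {i : Fin 2}

lemma stepMean_congr {f g : E → G} (hfg : EqOn f g (jumps a h i)) :
    stepMean a h p α q i f = stepMean a h p α q i g := by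
  have hup : f (vec 0 0 h) = g (vec 0 0 h) := hfg (.inl (.inl rfl))
  have hdown : f (vec 0 0 (-h)) = g (vec 0 0 (-h)) := hfg (.inl (.inr rfl))
  have hw (j : Fin 3) : f (w a i j) = g (w a i j) := hfg (.inr ⟨j, rfl⟩)
  simp only [stepMean, hup, hdown, hw]

lemma map_stepMean (L : G →ₗ[ℝ] G') (f : E → G) :
    L (stepMean a h p α q i f) = stepMean a h p α q i fun v ↦ L (f v) := by
  simp only [stepMean, map_add, map_sum, map_smul]

end

lemma stepMean_id (hq : ∀ i, q i 0 + q i 1 + q i 2 = 1 - p) (i : Fin 2) :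
    stepMean a h p α q i id = muI a h p α q + (-1 : ℝ) ^ (i : ℕ) • thetaI a p q := by
  have h0 : q 0 0 = 1 - p - q 0 1 - q 0 2 := by linarith [hq 0]
  have h1 : q 1 0 = 1 - p - q 1 1 - q 1 2 := by linarith [hq 1]
  ext l
  fin_cases i <;> fin_cases l <;>
    simp [stepMean, w_zero, w_one, w_two, Fin.sum_univ_three, muI, thetaI, uu, vv, h0, h1] <;> ring

/-- The vector `c` with `2 (1 - p) c = θ`. For `p = 1` division by zero gives `c = 0`, which is
right because then `θ = 0`. -/
def corrector (a p : ℝ) (q : Fin 2 → Fin 3 → ℝ) : E := (2 * (1 - p))⁻¹ • thetaI a p q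

lemma two_mul_one_sub_smul_corrector (hq0 : ∀ i j, 0 ≤ q i j)
    (hq : ∀ i, q i 0 + q i 1 + q i 2 = 1 - p) :
    (2 * (1 - p)) • corrector a p q = thetaI a p q := by
  rcases eq_or_ne p 1 with rfl | hp
  · have hzero (i : Fin 2) : q i 1 = 0 ∧ q i 2 = 0 := by
      constructor <;> linarith [hq i, hq0 i 0, hq0 i 1, hq0 i 2]
    ext l
    fin_cases l <;> simp [thetaI, uu, vv, hzero]
  · exact smul_inv_smul₀ (mul_ne_zero two_ne_zero (sub_ne_zero.2 hp.symm)) _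

/-- The space-time function `x - n μ + ε(x) c`, which turns the walk into a martingale. -/
def corrected (a h p α : ℝ) (q : Fin 2 → Fin 3 → ℝ) (n : ℕ) (x : E) : E :=
  x - (n : ℝ) • muI a h p α q + vertexSign a h x • corrector a p q

-- A horizontal jump flips the sign, so the mean of `ε c` drops by `2 (1 - p) ε c = ε θ`, which
-- cancels the excess of the mean jump `μ + ε θ` over `μ`.
lemma stepMean_corrected (ha : a ≠ 0) (hq0 : ∀ i j, 0 ≤ q i j)
    (hq : ∀ i, q i 0 + q i 1 + q i 2 = 1 - p) (n : ℕ) {i : Fin 2} {x : E} (hx : x ∈ V a h i) :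
    stepMean a h p α q i (fun v ↦ corrected a h p α q (n + 1) (x + v))
      = corrected a h p α q n x := by
  have hmean := stepMean_id (a := a) (h := h) (α := α) hq i
  rw [← vertexSign_eq_neg_one_pow ha hx, ← two_mul_one_sub_smul_corrector hq0 hq] at hmean
  have hq_zero : q i 0 = 1 - p - q i 1 - q i 2 := by linarith [hq i]
  simp only [stepMean, id, Fin.sum_univ_three, hq_zero] at hmean
  simp only [stepMean, corrected, vertexSign_add_up ha hx, vertexSign_add_down ha hx,
    vertexSign_add_w ha hx, Fin.sum_univ_three, hq_zero, Nat.cast_succ]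
  linear_combination (norm := module) hmean

variable (a h p α q) in
lemma measurable_corrected (n : ℕ) : Measurable (corrected a h p α q n) := by
  have := measurable_vertexSign a h
  unfold corrected
  fun_prop

lemma norm_vertexSign_smul_le (x v : E) : ‖vertexSign a h x • v‖ ≤ ‖v‖ := by
  rw [norm_smul]
  exact mul_le_of_le_one_left (norm_nonneg v) (abs_vertexSign_le_one x)

lemma norm_corrected_le (n : ℕ) (x : E) :
    ‖corrected a h p α q n x‖ ≤ ‖x‖ + n * ‖muI a h p α q‖ + ‖corrector a p q‖ := by
  refine (norm_add_le _ _).trans (add_le_add ((norm_sub_le _ _).trans ?_)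
    (norm_vertexSign_smul_le _ _))
  rw [norm_smul, Real.norm_natCast]

lemma norm_corrected_succ_sub_le (n : ℕ) (x y : E) :
    ‖corrected a h p α q (n + 1) y - corrected a h p α q n x‖ ≤
      ‖y - x‖ + ‖muI a h p α q‖ + 2 * ‖corrector a p q‖ := by
  have hsplit : corrected a h p α q (n + 1) y - corrected a h p α q n x =
      (y - x) - muI a h p α q + vertexSign a h y • corrector a p q
        - vertexSign a h x • corrector a p q := by
    simp only [corrected, Nat.cast_succ]
    module
  rw [hsplit]
  have hx := norm_vertexSign_smul_le (a := a) (h := h) x (corrector a p q)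
  have hy := norm_vertexSign_smul_le (a := a) (h := h) y (corrector a p q)
  grw [norm_sub_le, norm_add_le, norm_sub_le, hx, hy]
  linarith

end Drift

namespace IsRWI

variable {Ω : Type} [MeasurableSpace Ω] {P : Measure Ω} {a h p α : ℝ} {q : Fin 2 → Fin 3 → ℝ}
  {S : ℕ → Ω → E} {F : ℕ → MeasurableSpace Ω} (hRW : IsRWI P a h p α q S F)
include hRW

lemma measurable_sub_of_lt {k n : ℕ} (hk : k < n) :
    Measurable[F n] fun ω ↦ S (k + 1) ω - S k ω := by
  rw [hRW.hF n]
  exact (measurable_pi_apply (X := fun _ : Fin n ↦ E) ⟨k, hk⟩).comp (comap_measurable _)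

/-- The natural filtration `F` of the walk as a bundled filtration. -/
def filtration : Filtration ℕ ‹MeasurableSpace Ω› where
  seq := F
  mono' m n hmn := by
    rw [hRW.hF m]
    exact Measurable.comap_le <| @measurable_pi_lambda Ω (Fin m) (fun _ ↦ E) (F n) _ _ fun k ↦
      hRW.measurable_sub_of_lt (k.2.trans_le hmn)
  le' n := by
    rw [hRW.hF n]
    exact Measurable.comap_le <| measurable_pi_lambda _ fun k ↦
      (hRW.hSmeas _).sub (hRW.hSmeas _)

lemma adapted (n : ℕ) : Measurable[F n] (S n) := by
  induction n with
  | zero => exact funext hRW.hS0 ▸ measurable_const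
  | succ n ih =>
    have hmono : F n ≤ F (n + 1) := hRW.filtration.mono n.le_succ
    convert (ih.mono hmono le_rfl).add (hRW.measurable_sub_of_lt n.lt_succ_self) using 1
    exact funext fun ω ↦ (add_sub_cancel _ _).symm

lemma condExp_comp_succ_of_bounded {f : E → ℝ} (hf : Measurable f) {C : ℝ}
    (hC : ∀ x, |f x| ≤ C) (n : ℕ) :
    ∀ᵐ ω ∂P, ∀ i, S n ω ∈ V a h i →
      (P[fun ω ↦ f (S (n + 1) ω) | F n]) ω = stepMean a h p α q i fun v ↦ f (S n ω + v) := by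
  filter_upwards [hRW.hTrans n f hf ⟨C, hC⟩] with ω hω i hi
  have hother (j : Fin 2) (hj : j ≠ i) : S n ω ∉ V a h j := fun hmem ↦
    hj (eq_of_mem_V_of_mem_V hRW.ha.ne' hmem hi)
  rw [hω, Finset.sum_eq_single_of_mem i (Finset.mem_univ i) fun j _ hj ↦ by
    rw [indicator_of_notMem (hother j hj), zero_mul], indicator_of_mem hi, one_mul]
  simp only [stepMean, smul_eq_mul]

lemma ae_sub_mem_jumps (n : ℕ) {i : Fin 2} {x : E} (hx : x ∈ V a h i) :
    ∀ᵐ ω ∂P, S n ω = x → S (n + 1) ω - x ∈ jumps a h i := by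
  have := hRW.prob
  let A : Set E := {y | y - x ∉ jumps a h i}
  have hA : MeasurableSet A :=
    ((finite_jumps a h i).measurableSet.compl).preimage (measurable_id.sub_const x)
  have hf : Measurable (A.indicator (1 : E → ℝ)) := measurable_one.indicator hA
  have hf1 (y : E) : |A.indicator (1 : E → ℝ) y| ≤ 1 := by
    by_cases hy : y ∈ A <;> simp [hy]
  have hint : Integrable (fun ω ↦ A.indicator (1 : E → ℝ) (S (n + 1) ω)) P :=
    .of_bound (hf.comp (hRW.hSmeas _)).aestronglyMeasurable 1 (ae_of_all _ fun ω ↦ hf1 _)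
  have hzero : ∀ᵐ ω ∂P, S n ω = x →
      (P[fun ω ↦ A.indicator (1 : E → ℝ) (S (n + 1) ω) | F n]) ω = 0 := by
    filter_upwards [hRW.condExp_comp_succ_of_bounded hf hf1 n] with ω hω hSx
    have hjump : EqOn (fun v ↦ A.indicator (1 : E → ℝ) (S n ω + v)) 0 (jumps a h i) := by
      intro v hv
      simp [A, hSx, hv]
    rw [hω i (hSx ▸ hx), stepMean_congr hjump]
    simp [stepMean]
  filter_upwards [ae_imp_eq_zero_of_condExp_eq_zero (hRW.filtration.le n) hint
    (ae_of_all _ fun ω ↦ indicator_nonneg (fun _ _ ↦ zero_le_one) _)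
    (hRW.adapted n (measurableSet_singleton x)) hzero] with ω hω hSx
  simpa [A] using hω hSx

lemma ae_isLatticePath : ∀ᵐ ω ∂P, IsLatticePath a h fun n ↦ S n ω := by
  have hjump : ∀ᵐ ω ∂P, ∀ n i, ∀ x ∈ V a h i, S n ω = x → S (n + 1) ω - x ∈ jumps a h i :=
    ae_all_iff.2 fun n ↦ ae_all_iff.2 fun i ↦ (ae_ball_iff (countable_V i)).2 fun x hx ↦
      hRW.ae_sub_mem_jumps n hx
  filter_upwards [hjump] with ω hω
  exact ⟨hRW.hS0 ω, fun n i hi ↦ hω n i _ hi rfl⟩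

lemma condExp_comp_succ {f : E → ℝ} (hf : Measurable f)
    (hbdd : ∀ r, ∃ C, ∀ x ∈ Metric.closedBall (0 : E) r, |f x| ≤ C) (n : ℕ) :
    ∀ᵐ ω ∂P, ∀ i, S n ω ∈ V a h i →
      (P[fun ω ↦ f (S (n + 1) ω) | F n]) ω = stepMean a h p α q i fun v ↦ f (S n ω + v) := by
  let B := Metric.closedBall (0 : E) ((n + 1 : ℕ) * max |a| |h|)
  obtain ⟨C, hC⟩ := hbdd ((n + 1 : ℕ) * max |a| |h|)
  have hfB : Measurable (B.indicator f) := hf.indicator Metric.isClosed_closedBall.measurableSet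
  have hfBC (x : E) : |B.indicator f x| ≤ max C 0 := by
    by_cases hx : x ∈ B
    · simpa [hx] using .inl (hC x hx)
    · simp [hx]
  have htrunc : (fun ω ↦ f (S (n + 1) ω)) =ᵐ[P] fun ω ↦ B.indicator f (S (n + 1) ω) := by
    filter_upwards [hRW.ae_isLatticePath] with ω hpath
    exact (indicator_of_mem (mem_closedBall_zero_iff.2 (hpath.norm_le (n + 1))) f).symm
  filter_upwards [condExp_congr_ae (m := F n) htrunc, hRW.condExp_comp_succ_of_bounded hfB hfBC n,
    hRW.ae_isLatticePath] with ω hcongr hstep hpath i hi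
  rw [hcongr, hstep i hi]
  refine stepMean_congr fun v hv ↦ indicator_of_mem (mem_closedBall_zero_iff.2 ?_) f
  calc ‖S n ω + v‖ ≤ ‖S n ω‖ + ‖v‖ := norm_add_le _ _
    _ ≤ n * max |a| |h| + max |a| |h| := add_le_add (hpath.norm_le n) (norm_le_of_mem_jumps hv)
    _ = (n + 1 : ℕ) * max |a| |h| := by push_cast; ring

lemma ae_norm_corrected_le (n : ℕ) : ∀ᵐ ω ∂P, ‖corrected a h p α q n (S n ω)‖ ≤
    n * max |a| |h| + n * ‖muI a h p α q‖ + ‖corrector a p q‖ := by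
  filter_upwards [hRW.ae_isLatticePath] with ω hpath
  grw [norm_corrected_le, hpath.norm_le n]

lemma memLp_corrected (L : E →L[ℝ] ℝ) (n : ℕ) (r : ENNReal) :
    MemLp (fun ω ↦ L (corrected a h p α q n (S n ω))) r P := by
  have := hRW.prob
  refine L.comp_memLp' (.of_bound ?_ _ (hRW.ae_norm_corrected_le n))
  exact ((measurable_corrected a h p α q n).comp (hRW.hSmeas n)).aestronglyMeasurable

lemma martingale_corrected (L : E →L[ℝ] ℝ) :
    Martingale (fun n ω ↦ L (corrected a h p α q n (S n ω))) hRW.filtration P := by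
  have := hRW.prob
  have hmeas (n : ℕ) : Measurable fun x ↦ L (corrected a h p α q n x) :=
    L.measurable.comp (measurable_corrected a h p α q n)
  have hbdd (n : ℕ) (r : ℝ) :
      ∃ C, ∀ x ∈ Metric.closedBall (0 : E) r, |L (corrected a h p α q n x)| ≤ C := by
    refine ⟨‖L‖ * (r + n * ‖muI a h p α q‖ + ‖corrector a p q‖), fun x hx ↦ ?_⟩
    rw [mem_closedBall_zero_iff] at hx
    grw [← Real.norm_eq_abs, L.le_opNorm, norm_corrected_le, hx]
  refine martingale_nat (fun n ↦ ((hmeas n).comp (hRW.adapted n)).stronglyMeasurable)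
    (fun n ↦ memLp_one_iff_integrable.1 (hRW.memLp_corrected L n 1)) fun n ↦ ?_
  filter_upwards [hRW.condExp_comp_succ (hmeas (n + 1)) (hbdd (n + 1)) n, hRW.ae_isLatticePath]
    with ω hω hpath
  obtain ⟨i, hi⟩ := hpath.exists_mem_V n
  exact (congrArg L (stepMean_corrected hRW.ha.ne' hRW.hq hRW.hqsum n hi).symm).trans
    ((map_stepMean (L : E →ₗ[ℝ] ℝ) _).trans (hω i hi).symm)

lemma ae_tendsto_inv_mul_corrected (L : E →L[ℝ] ℝ) :
    ∀ᵐ ω ∂P, Tendsto (fun n : ℕ ↦ (n : ℝ)⁻¹ * L (corrected a h p α q n (S n ω))) atTop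
      (nhds 0) := by
  have := hRW.prob
  refine ae_tendsto_inv_mul_martingale_of_abs_sub_le (hRW.martingale_corrected L)
    (hRW.memLp_corrected L 0 2)
    (K := ‖L‖ * (max |a| |h| + ‖muI a h p α q‖ + 2 * ‖corrector a p q‖)) fun n ↦ ?_
  filter_upwards [hRW.ae_isLatticePath] with ω hpath
  grw [← map_sub, ← Real.norm_eq_abs, L.le_opNorm, norm_corrected_succ_sub_le,
    hpath.norm_sub_le n]

lemma ae_tendsto_inv_smul_corrected :
    ∀ᵐ ω ∂P, Tendsto (fun n : ℕ ↦ (n : ℝ)⁻¹ • corrected a h p α q n (S n ω)) atTop (nhds 0) := by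
  have hcoord := ae_all_iff.2 fun l : Fin 3 ↦
    hRW.ae_tendsto_inv_mul_corrected (EuclideanSpace.proj l)
  filter_upwards [hcoord] with ω hω
  rw [(EuclideanSpace.equiv (Fin 3) ℝ).toHomeomorph.isInducing.tendsto_nhds_iff, tendsto_pi_nhds]
  simpa using hω

end IsRWI

end RWI

theorem rwi_slln {Ω : Type} [MeasurableSpace Ω] (P : Measure Ω)
    (a h p α : ℝ) (q : Fin 2 → Fin 3 → ℝ)
    (S : ℕ → Ω → RWI.E) (F : ℕ → MeasurableSpace Ω)
    (hRW : RWI.IsRWI P a h p α q S F) :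
    ∀ᵐ ω ∂P, Tendsto (fun n : ℕ => (n : ℝ)⁻¹ • S n ω) atTop (nhds (RWI.muI a h p α q)) := by
  filter_upwards [hRW.ae_tendsto_inv_smul_corrected] with ω hcorrected
  have hsign : Tendsto (fun n : ℕ ↦ (n : ℝ)⁻¹ •
      RWI.vertexSign a h (S n ω) • RWI.corrector a p q) atTop (nhds 0) :=
    tendsto_inv_atTop_nhds_zero_nat.zero_smul_isBoundedUnder_le <|
      isBoundedUnder_of ⟨_, fun n ↦ RWI.norm_vertexSign_smul_le _ _⟩
  have hlim := (hcorrected.sub hsign).add_const (RWI.muI a h p α q)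
  rw [sub_zero, zero_add] at hlim
  refine hlim.congr' ?_
  filter_upwards [eventually_ne_atTop 0] with n hn
  rw [← smul_sub, RWI.corrected, add_sub_cancel_right, smul_sub,
    inv_smul_smul₀ (Nat.cast_ne_zero.2 hn), sub_add_cancel]
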